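/- Let G be a hyperbolic group and let h ∈ G be an element of infinite order. Then the set of roots of h, i.e. {x ∈ G | ∃ n ≥ 1, x^n = h}, is finite, and its cardinality is at most the index of the cyclic subgroup ⟨h⟩ in the centralizer Z_G(h) (which is finite). -/

import Mathlib

/-- The word metric on a group `G` with respect to a generating set `S`:
`wordDist S g h` is the least length of a word in `S ∪ S⁻¹` representing `g⁻¹ * h`. -/
noncomputable def wordDist {G : Type*} [Group G] (S : Set G) (g h : G) : ℝ :=
  sInf {r : ℝ | ∃ l : List G, (∀ x ∈ l, x ∈ S ∨ x⁻¹ ∈ S) ∧ l.prod = g⁻¹ * h ∧ r = l.length}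

/-- The Gromov product `(x|y)_w` with respect to the word metric for `S`. -/
noncomputable def gromovProd {G : Type*} [Group G] (S : Set G) (w x y : G) : ℝ :=
  (wordDist S x w + wordDist S y w - wordDist S x y) / 2

/-- A group is (Gromov) hyperbolic if it admits a finite generating set `S` such that
the word metric `d_S` satisfies the Gromov product four-point condition for some `δ ≥ 0`. -/
def IsHyperbolicGroup (G : Type*) [Group G] : Prop :=
  ∃ S : Set G, S.Finite ∧ Subgroup.closure S = ⊤ ∧
    ∃ δ : ℝ, 0 ≤ δ ∧ ∀ w x y z : G,
      gromovProd S w x y ≥ min (gromovProd S w x z) (gromovProd S w y z) - δ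

/-!
Let `c` commute with `h` and be shortest in its coset `c⟨h⟩`, and let `m` be a midpoint of `1` and
`c`. If `g = h ^ k` is no longer than `c`, then in the quadrilateral `1, c, g * c, g` both diagonals
are at least as long as the sides `[1, c]` and `[g, g * c]`, so the four-point condition forces the
midpoints `m` and `g * m` of these sides to be close: `m⁻¹ * g * m` lies in a ball of radius
independent of `c` and `k`. Such a ball holds only finitely many elements, while the conjugates
`m⁻¹ * h ^ k * m` are pairwise distinct, so some `h ^ k` with bounded `k` is at least as long as
`c`. Hence shortest coset representatives have bounded length, and `⟨h⟩` has finite index in the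
centralizer.

Distinct roots of `h` lie in distinct cosets of `⟨h⟩`: if `x ^ n = h`, `y ^ m = h` and
`y = x * h ^ k`, then computing `y ^ (m * n)` in two ways gives `n = m * (1 + k * n)`, which for
positive `m` and `n` forces `k = 0`.
-/

/-! ### Hyperbolic distance functions -/

/-- `d` is a symmetric function satisfying Gromov's `δ`-hyperbolicity inequality, written as a
comparison of the three sums of opposite sides of a quadrilateral. No other metric axiom is
imposed on `d`. -/
structure IsHyperbolicDist {X : Type*} (d : X → X → ℝ) (δ : ℝ) : Prop where
  nonneg : 0 ≤ δ
  comm : ∀ x y, d x y = d y x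
  four_point : ∀ p q r s, d p q + d r s ≤ max (d p r + d q s) (d p s + d q r) + 2 * δ

/-- `m` is a midpoint of `p` and `q` up to an additive error `ε`; word metrics, being
integer-valued, have only such approximate midpoints. -/
structure IsApproxMidpoint {X : Type*} (d : X → X → ℝ) (ε : ℝ) (p q m : X) : Prop where
  dist_left_le : d p m ≤ d p q / 2 + ε
  dist_right_le : d q m ≤ d p q / 2 + ε

namespace IsHyperbolicDist

section Quadrilateral

variable {X : Type*} {d : X → X → ℝ} {δ ε : ℝ} {p q p' q' m m' x : X}

theorem dist_approxMidpoint_le (hd : IsHyperbolicDist d δ) (hm : IsApproxMidpoint d ε p q m)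
    {r : ℝ} (hp : d p x ≤ d p q / 2 + r) (hq : d q x ≤ d p q / 2 + r) :
    d m x ≤ r + ε + 2 * δ := by
  have hsum := hd.four_point m x p q
  have hmax : max (d m p + d x q) (d m q + d x p) ≤ d p q + r + ε := by
    rw [hd.comm m p, hd.comm m q, hd.comm x p, hd.comm x q]
    exact max_le (by linarith [hm.dist_left_le]) (by linarith [hm.dist_right_le])
  linarith

theorem add_diagonals_le (hd : IsHyperbolicDist d δ) (hside : d p' q' = d p q)
    (hp : d p p' ≤ d p q) (hq : d q q' ≤ d p q) :
    d p q' + d q p' ≤ 2 * d p q + 2 * δ := by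
  have hsum := hd.four_point p q' q p'
  have hmax : max (d p q + d q' p') (d p p' + d q' q) ≤ 2 * d p q := by
    rw [hd.comm q' p', hd.comm q' q]
    exact max_le (by linarith) (by linarith)
  linarith

theorem dist_approxMidpoints_le (hd : IsHyperbolicDist d δ) (hside : d p' q' = d p q)
    (hp : d p p' ≤ d p q) (hq : d q q' ≤ d p q)
    (hpq' : d p q ≤ d p q') (hqp' : d p q ≤ d q p')
    (hm : IsApproxMidpoint d ε p q m) (hm' : IsApproxMidpoint d ε p' q' m') :
    d m m' ≤ 6 * δ + 2 * ε := by
  have hδ := hd.nonneg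
  have hdiag := hd.add_diagonals_le hside hp hq
  have hmp' : d m p' ≤ (d p q / 2 + 2 * δ) + ε + 2 * δ :=
    hd.dist_approxMidpoint_le hm (by linarith) (by linarith)
  have hmq' : d m q' ≤ (d p q / 2 + 2 * δ) + ε + 2 * δ :=
    hd.dist_approxMidpoint_le hm (by linarith) (by linarith)
  have hm'm : d m' m ≤ (4 * δ + ε) + ε + 2 * δ :=
    hd.dist_approxMidpoint_le hm' (by rw [hd.comm p' m]; linarith) (by rw [hd.comm q' m]; linarith)
  rw [hd.comm m m']
  linarith

end Quadrilateral

/-! ### Invariant hyperbolic distances and centralizers -/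

section Group

variable {G : Type*} [Group G] {d : G → G → ℝ} {δ ε : ℝ} {h : G}

theorem dist_one_conj_approxMidpoint_le (hd : IsHyperbolicDist d δ)
    (hinv : ∀ g x y, d (g * x) (g * y) = d x y) {c g m : G} (hcg : Commute c g)
    (hg : d 1 g ≤ d 1 c) (hmul : d 1 c ≤ d 1 (c * g)) (hmul_inv : d 1 c ≤ d 1 (c * g⁻¹))
    (hm : IsApproxMidpoint d ε 1 c m) :
    d 1 (m⁻¹ * g * m) ≤ 6 * δ + 2 * ε := by
  have hside : d g (g * c) = d 1 c := by simpa only [mul_one] using hinv g 1 c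
  have hc_gc : d c (g * c) = d 1 g := by simpa only [mul_one, hcg.eq] using hinv c 1 g
  have hc_g : d c g = d 1 (c * g⁻¹) := by
    rw [hd.comm, ← hinv g 1, mul_one, hcg.inv_right.eq, mul_inv_cancel_left]
  have hgm : IsApproxMidpoint d ε g (g * c) (g * m) :=
    ⟨by simpa only [hside, ← hinv g 1 m, mul_one] using hm.dist_left_le,
      by simpa only [hside, hinv] using hm.dist_right_le⟩
  calc d 1 (m⁻¹ * g * m) = d m (g * m) := by
        rw [← hinv m, mul_one, mul_assoc, mul_inv_cancel_left]
    _ ≤ 6 * δ + 2 * ε :=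
        hd.dist_approxMidpoints_le hside hg (hc_gc.trans_le hg) (hcg.eq ▸ hmul)
          (hmul_inv.trans_eq hc_g.symm) hm hgm

theorem exists_forall_minimal_exists_dist_le_dist_pow (hd : IsHyperbolicDist d δ)
    (hinv : ∀ g x y, d (g * x) (g * y) = d x y)
    (hmid : ∀ x y, ∃ m, IsApproxMidpoint d ε x y m) [Northcott (d 1)] (hh : ¬IsOfFinOrder h) :
    ∃ N : ℕ, ∀ c, Commute c h → (∀ n : ℤ, d 1 c ≤ d 1 (c * h ^ n)) →
      ∃ k ≤ N, d 1 c ≤ d 1 (h ^ k) := by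
  have hball : {g | d 1 g ≤ 6 * δ + 2 * ε}.Finite := Northcott.finite_le _
  refine ⟨hball.toFinset.card, fun c hc hmin ↦ ?_⟩
  by_contra! hlong
  obtain ⟨m, hm⟩ := hmid 1 c
  have hmaps : ∀ k ∈ Finset.range (hball.toFinset.card + 1),
      m⁻¹ * h ^ k * m ∈ hball.toFinset := fun k hk ↦ by
    have hk_short := (hlong k (Finset.mem_range_succ_iff.mp hk)).le
    have hmul : d 1 c ≤ d 1 (c * h ^ k) := by simpa only [zpow_natCast] using hmin k
    have hmul_inv : d 1 c ≤ d 1 (c * (h ^ k)⁻¹) := by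
      simpa only [zpow_neg, zpow_natCast] using hmin (-k)
    exact hball.mem_toFinset.mpr <|
      hd.dist_one_conj_approxMidpoint_le hinv (hc.pow_right k) hk_short hmul hmul_inv hm
  have hinj : Function.Injective fun k : ℕ ↦ m⁻¹ * h ^ k * m :=
    (mul_left_injective m).comp <|
      (mul_right_injective m⁻¹).comp (injective_pow_iff_not_isOfFinOrder.mpr hh)
  have hcard := Finset.card_le_card_of_injOn _ hmaps hinj.injOn
  rw [Finset.card_range] at hcard
  exact absurd hcard (Nat.lt_irrefl _)

theorem finite_setOf_commute_minimal (hd : IsHyperbolicDist d δ)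
    (hinv : ∀ g x y, d (g * x) (g * y) = d x y)
    (hmid : ∀ x y, ∃ m, IsApproxMidpoint d ε x y m) [Northcott (d 1)] (hh : ¬IsOfFinOrder h) :
    {c | Commute c h ∧ ∀ n : ℤ, d 1 c ≤ d 1 (c * h ^ n)}.Finite := by
  obtain ⟨N, hN⟩ := hd.exists_forall_minimal_exists_dist_le_dist_pow hinv hmid hh
  refine ((Set.finite_Iic N).biUnion fun k _ ↦
    Northcott.finite_le (h := d 1) (d 1 (h ^ k))).subset fun c ⟨hc, hmin⟩ ↦ ?_
  obtain ⟨k, hk, hck⟩ := hN c hc hmin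
  exact Set.mem_biUnion hk hck

end Group

end IsHyperbolicDist

theorem finiteIndex_of_finite_of_forall_exists_inv_mul_mem {G : Type*} [Group G] {H : Subgroup G}
    {T : Set G} (hT : T.Finite) (hcover : ∀ g, ∃ t ∈ T, t⁻¹ * g ∈ H) : H.FiniteIndex := by
  refine Subgroup.finiteIndex_of_leftCoset_cover_const (s := hT.toFinset) (g := id)
    (Set.eq_univ_of_forall fun g ↦ ?_)
  obtain ⟨t, ht, htg⟩ := hcover g
  exact Set.mem_biUnion (hT.mem_toFinset.mpr ht) ((mem_leftCoset_iff t).mpr htg)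

theorem IsHyperbolicDist.finiteIndex_zpowers_subgroupOf_centralizer {G : Type*} [Group G]
    {d : G → G → ℝ} {δ ε : ℝ} {h : G} (hd : IsHyperbolicDist d δ)
    (hinv : ∀ g x y, d (g * x) (g * y) = d x y)
    (hmid : ∀ x y, ∃ m, IsApproxMidpoint d ε x y m) [Northcott (d 1)] (hh : ¬IsOfFinOrder h) :
    ((Subgroup.zpowers h).subgroupOf (Subgroup.centralizer {h})).FiniteIndex := by
  have hfin := (hd.finite_setOf_commute_minimal hinv hmid hh).preimage
    (f := ((↑) : Subgroup.centralizer {h} → G)) Subtype.val_injective.injOn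
  refine finiteIndex_of_finite_of_forall_exists_inv_mul_mem hfin fun ⟨c, hc⟩ ↦ ?_
  have hch : Commute c h := Subgroup.mem_centralizer_singleton_iff.mp hc
  obtain ⟨-, ⟨k, rfl⟩, hmin⟩ := Northcott.exists_min_image (d 1)
    (Set.range fun n : ℤ ↦ c * h ^ n) (Set.range_nonempty _)
  have hck : Commute (c * h ^ k) h := hch.mul_left ((Commute.refl h).zpow_left k)
  refine ⟨⟨c * h ^ k, Subgroup.mem_centralizer_singleton_iff.mpr hck⟩, ⟨hck, fun n ↦ ?_⟩, ?_⟩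
  · exact hmin _ ⟨k + n, by simp only [zpow_add, mul_assoc]⟩
  · rw [Subgroup.mem_subgroupOf]
    exact ⟨-k, by simp⟩

/-! ### Word metrics -/

section WordMetric

variable {G : Type*} [Group G] {S : Set G} {l : List G}

/-- `l` is a word in the alphabet `S ∪ S⁻¹`; it represents the group element `l.prod`. -/
def IsWord (S : Set G) (l : List G) : Prop :=
  ∀ x ∈ l, x ∈ S ∨ x⁻¹ ∈ S

theorem IsWord.take (hl : IsWord S l) (n : ℕ) : IsWord S (l.take n) :=
  fun x hx ↦ hl x (List.mem_of_mem_take hx)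

theorem IsWord.drop (hl : IsWord S l) (n : ℕ) : IsWord S (l.drop n) :=
  fun x hx ↦ hl x (List.mem_of_mem_drop hx)

theorem IsWord.reverse_map_inv (hl : IsWord S l) : IsWord S (l.map (·⁻¹)).reverse := by
  intro x hx
  obtain ⟨y, hy, rfl⟩ := List.mem_map.mp (List.mem_reverse.mp hx)
  simpa only [inv_inv] using (hl y hy).symm

open scoped Pointwise in
theorem IsWord.prod_mem_pow (hl : IsWord S l) : l.prod ∈ (S ∪ S⁻¹) ^ l.length := by
  induction l with
  | nil => simp
  | cons x l ih =>
    rw [List.prod_cons, List.length_cons, pow_succ']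
    exact Set.mul_mem_mul (hl x List.mem_cons_self) (ih fun y hy ↦ hl y (List.mem_cons_of_mem x hy))

theorem exists_isWord_prod_eq (hS : Subgroup.closure S = ⊤) (g : G) :
    ∃ l, IsWord S l ∧ l.prod = g := by
  have hg : g ∈ (Subgroup.closure S).toSubmonoid := hS ▸ Subgroup.mem_top g
  rw [Subgroup.closure_toSubmonoid] at hg
  exact Submonoid.exists_list_of_mem_closure hg

theorem wordDist_mul_left (g x y : G) : wordDist S (g * x) (g * y) = wordDist S x y := by
  simp only [wordDist, mul_inv_rev, mul_assoc, inv_mul_cancel_left]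

theorem wordDist_comm (x y : G) : wordDist S x y = wordDist S y x := by
  unfold wordDist
  congr 1
  refine Set.ext fun r ↦ ⟨?_, ?_⟩ <;>
  · rintro ⟨l, hl, hprod, rfl⟩
    exact ⟨_, IsWord.reverse_map_inv hl,
      by rw [← List.prod_inv_reverse, hprod, mul_inv_rev, inv_inv], by simp⟩

theorem wordDist_le_length (hl : IsWord S l) {x y : G} (hxy : l.prod = x⁻¹ * y) :
    wordDist S x y ≤ l.length :=
  csInf_le ⟨0, by rintro _ ⟨l', -, -, rfl⟩; positivity⟩ ⟨l, hl, hxy, rfl⟩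

theorem exists_isWord_length_eq_wordDist (hS : Subgroup.closure S = ⊤) (x y : G) :
    ∃ l, IsWord S l ∧ l.prod = x⁻¹ * y ∧ (l.length : ℝ) = wordDist S x y := by
  obtain ⟨l, ⟨hl, hxy⟩, hmin⟩ := exists_minimalFor_of_wellFoundedLT
    (fun l ↦ IsWord S l ∧ l.prod = x⁻¹ * y) List.length (exists_isWord_prod_eq hS _)
  refine ⟨l, hl, hxy, le_antisymm (le_csInf ⟨_, l, hl, hxy, rfl⟩ ?_) (wordDist_le_length hl hxy)⟩
  rintro _ ⟨l', hl', hxy', rfl⟩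
  exact_mod_cast (le_total l.length l'.length).elim id (hmin ⟨hl', hxy'⟩)

open scoped Pointwise in
theorem finite_pow_of_finite {M : Type*} [Monoid M] {s : Set M} (hs : s.Finite) (n : ℕ) :
    (s ^ n).Finite := by
  induction n with
  | zero => simp
  | succ n ih => exact pow_succ s n ▸ ih.mul hs

open scoped Pointwise in
theorem northcott_wordDist_one (hfin : S.Finite) (hS : Subgroup.closure S = ⊤) :
    Northcott (wordDist S 1) where
  finite_le r := by
    refine ((Set.finite_Iic ⌊r⌋₊).biUnion fun n _ ↦
      finite_pow_of_finite (hfin.union hfin.inv) n).subset fun g hg ↦ ?_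
    obtain ⟨l, hl, hprod, hlen⟩ := exists_isWord_length_eq_wordDist hS 1 g
    rw [inv_one, one_mul] at hprod
    exact Set.mem_biUnion (Nat.le_floor (hlen.trans_le hg)) (hprod ▸ hl.prod_mem_pow)

theorem exists_isApproxMidpoint_wordDist (hS : Subgroup.closure S = ⊤) (x y : G) :
    ∃ m, IsApproxMidpoint (wordDist S) (1 / 2) x y m := by
  obtain ⟨l, hl, hxy, hlen⟩ := exists_isWord_length_eq_wordDist hS x y
  set a := l.length / 2
  have hleft : wordDist S x (x * (l.take a).prod) ≤ (l.take a).length :=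
    wordDist_le_length (hl.take a) (inv_mul_cancel_left _ _).symm
  have hright : wordDist S (x * (l.take a).prod) y ≤ (l.drop a).length := by
    refine wordDist_le_length (hl.drop a) ?_
    rw [mul_inv_rev, mul_assoc, ← hxy, ← List.prod_take_mul_prod_drop l a, inv_mul_cancel_left]
  have htake : 2 * ((l.take a).length : ℝ) ≤ l.length + 1 := by
    exact_mod_cast (by rw [List.length_take]; omega : 2 * (l.take a).length ≤ l.length + 1)
  have hdrop : 2 * ((l.drop a).length : ℝ) ≤ l.length + 1 := by
    exact_mod_cast (by rw [List.length_drop]; omega : 2 * (l.drop a).length ≤ l.length + 1)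
  refine ⟨x * (l.take a).prod, by linarith, ?_⟩
  rw [wordDist_comm]
  linarith

theorem isHyperbolicDist_wordDist {δ : ℝ} (hδ : 0 ≤ δ)
    (hprod : ∀ w x y z : G,
      gromovProd S w x y ≥ min (gromovProd S w x z) (gromovProd S w y z) - δ) :
    IsHyperbolicDist (wordDist S) δ where
  nonneg := hδ
  comm := wordDist_comm
  four_point p q r s := by
    have hpqr := hprod s p q r
    simp only [gromovProd] at hpqr
    have hleft := le_max_left (wordDist S p r + wordDist S q s) (wordDist S p s + wordDist S q r)
    have hright := le_max_right (wordDist S p r + wordDist S q s) (wordDist S p s + wordDist S q r)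
    rcases min_le_iff.mp (sub_le_iff_le_add.mp hpqr) with hp | hq <;> linarith

theorem IsHyperbolicGroup.finiteIndex_zpowers_subgroupOf_centralizer (hG : IsHyperbolicGroup G)
    {h : G} (hh : ¬IsOfFinOrder h) :
    ((Subgroup.zpowers h).subgroupOf (Subgroup.centralizer {h})).FiniteIndex := by
  obtain ⟨S, hfin, hS, δ, hδ, hprod⟩ := hG
  have := northcott_wordDist_one hfin hS
  exact (isHyperbolicDist_wordDist hδ hprod).finiteIndex_zpowers_subgroupOf_centralizer
    wordDist_mul_left (exists_isApproxMidpoint_wordDist hS) hh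

end WordMetric

/-! ### Roots -/

section Roots

variable {G : Type*} [Group G] {h : G}

/-- The set of roots of `h`: the elements having `h` as a positive power. -/
def rootsOf (h : G) : Set G :=
  {x | ∃ n : ℕ, 1 ≤ n ∧ x ^ n = h}

theorem rootsOf_subset_centralizer (h : G) : rootsOf h ⊆ Subgroup.centralizer {h} := by
  rintro x ⟨n, -, rfl⟩
  exact Subgroup.mem_centralizer_singleton_iff.mpr (Commute.self_pow x n)

theorem eq_zero_of_eq_mul_one_add_mul {m n k : ℤ} (hm : 0 < m) (hn : 0 < n)
    (heq : n = m * (1 + k * n)) : k = 0 := by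
  have hpos : 0 < 1 + k * n := pos_of_mul_pos_right (heq ▸ hn) hm.le
  have hk_nonneg : 0 ≤ k := nonneg_of_mul_nonneg_left (by omega : 0 ≤ k * n) hn
  have hle : 1 + k * n ≤ n := (le_mul_of_one_le_left hpos.le hm).trans_eq heq.symm
  have hk_lt_one : k < 1 := lt_of_mul_lt_mul_right (by omega : k * n < 1 * n) hn.le
  omega

theorem eq_of_mem_rootsOf_of_inv_mul_mem_zpowers (hh : ¬IsOfFinOrder h) {x y : G}
    (hx : x ∈ rootsOf h) (hy : y ∈ rootsOf h) (hxy : x⁻¹ * y ∈ Subgroup.zpowers h) : x = y := by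
  have hcomm : Commute x h :=
    Subgroup.mem_centralizer_singleton_iff.mp (rootsOf_subset_centralizer h hx)
  obtain ⟨n, hn, hxn⟩ := hx
  obtain ⟨m, hm, hym⟩ := hy
  obtain ⟨k, hk : h ^ k = x⁻¹ * y⟩ := hxy
  have hyk : y = x * h ^ k := by rw [hk, mul_inv_cancel_left]
  have hpow : h ^ (n : ℤ) = h ^ (m * (1 + k * n) : ℤ) := by
    calc h ^ (n : ℤ) = (y ^ m) ^ n := by rw [hym, zpow_natCast]
      _ = (x ^ n) ^ m * (h ^ k) ^ (m * n) := by
        rw [← pow_mul, hyk, (hcomm.zpow_right k).mul_pow, ← pow_mul, mul_comm n m]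
      _ = h ^ (m * (1 + k * n) : ℤ) := by
        rw [hxn, ← zpow_natCast, ← zpow_natCast, ← zpow_mul, ← zpow_add]
        push_cast
        ring_nf
  have hk_zero : k = 0 := eq_zero_of_eq_mul_one_add_mul (by exact_mod_cast hm)
    (by exact_mod_cast hn) (injective_zpow_iff_not_isOfFinOrder.mpr hh hpow)
  rw [hyk, hk_zero, zpow_zero, mul_one]

/-- The coset of `⟨h⟩` in the centralizer of `h` that contains a given root of `h`. -/
def rootCoset (h : G) (x : rootsOf h) :
    Subgroup.centralizer {h} ⧸ (Subgroup.zpowers h).subgroupOf (Subgroup.centralizer {h}) :=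
  QuotientGroup.mk (Set.inclusion (rootsOf_subset_centralizer h) x)

theorem rootCoset_injective (hh : ¬IsOfFinOrder h) : Function.Injective (rootCoset h) :=
  fun x y hxy ↦ Subtype.ext <| eq_of_mem_rootsOf_of_inv_mul_mem_zpowers hh x.2 y.2 <|
    Subgroup.mem_subgroupOf.mp (QuotientGroup.eq.mp hxy)

end Roots

/-- In a hyperbolic group, an element `h` of infinite order has only finitely many roots,
their number being at most the (finite) index of `⟨h⟩` in the centralizer of `h`. -/
theorem stmt_6 {G : Type*} [Group G] (hG : IsHyperbolicGroup G)
    (h : G) (hord : ∀ n : ℤ, n ≠ 0 → h ^ n ≠ 1) :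
    {x : G | ∃ n : ℕ, 1 ≤ n ∧ x ^ n = h}.Finite ∧
    ((Subgroup.zpowers h).subgroupOf (Subgroup.centralizer {h})).FiniteIndex ∧
    Nat.card {x : G | ∃ n : ℕ, 1 ≤ n ∧ x ^ n = h} ≤
      ((Subgroup.zpowers h).subgroupOf (Subgroup.centralizer {h})).index := by
  have hh : ¬IsOfFinOrder h := fun hfin ↦
    let ⟨n, hn, hn_one⟩ := isOfFinOrder_iff_zpow_eq_one.mp hfin
    hord n hn hn_one
  have hindex := hG.finiteIndex_zpowers_subgroupOf_centralizer hh
  have hinj := rootCoset_injective hh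
  exact ⟨Set.finite_coe_iff.mp (Finite.of_injective _ hinj), hindex,
    Nat.card_le_card_of_injective _ hinj⟩
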